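/- (Lemma 2.4, first part, concrete form: the Cauchy transform of ⌈f⌉ recovers the germ of f.) Let K ⊆ ℂ be compact, let f : ℂ → ℂ be holomorphic on ℂ \ K with f(λ) → 0 as |λ| → ∞, and let ρ : ℂ → ℝ be smooth with compact support and identically 1 on a neighborhood of K. Let F be the function on ℂ equal to f(z)·(∂̄ρ)(z) for z ∈ ℂ \ K and to 0 on K (a smooth compactly supported function). Then for every λ ∈ ℂ \ K one has (TF)(λ) = (ρ(λ) − 1)·f(λ). In particular TF = −f on the complement of tsupport ρ. -/

import Mathlib

open MeasureTheory

/-- The Wirtinger derivative `∂̄f(z) = (1/2)·(∂ₓf(z) + i·∂_yf(z))`. -/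
noncomputable def dbar (f : ℂ → ℂ) (z : ℂ) : ℂ :=
  (1 / 2) * (fderiv ℝ f z 1 + Complex.I * fderiv ℝ f z Complex.I)

/-- The Cauchy transform `(Tg)(z) = (1/π) ∫_ℂ g(μ)/(z - μ) dA(μ)` (the integrand is `0`
at `μ = z` by the division-by-zero convention). -/
noncomputable def cauchyT (g : ℂ → ℂ) (z : ℂ) : ℂ :=
  (1 / (Real.pi : ℂ)) * ∫ μ : ℂ, g μ / (z - μ)

/-!
Put `h = (ρ - 1) f`, which vanishes near `K`. It is `C¹` on the whole plane, `∂̄h = F`, and `h`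
vanishes at infinity, so the claim is the Cauchy–Pompeiu formula `T(∂̄h) = h`. For the latter, write
the integral of `∂̄h(μ) / (z - μ)` over a disc centred at `z` in polar coordinates: the Jacobian
cancels the pole, the angular part of `∂̄h` integrates to zero over each circle, and the radial part
integrates to the difference between the circle average of `h` and `h z`. As the radius grows, the
circle average tends to the value of `h` at infinity.
-/

open Filter Bornology Metric Set
open scoped Real Topology ComplexConjugate

section Dbar

variable {f g : ℂ → ℂ} {z : ℂ}

lemma dbar_congr (hfg : f =ᶠ[𝓝 z] g) : dbar f z = dbar g z := by
  simp only [dbar, hfg.fderiv_eq]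

lemma dbar_sub_const (f : ℂ → ℂ) (c z : ℂ) : dbar (fun w ↦ f w - c) z = dbar f z := by
  simp only [dbar, fderiv_sub_const]

lemma dbar_mul (hf : DifferentiableAt ℝ f z) (hg : DifferentiableAt ℝ g z) :
    dbar (fun w ↦ f w * g w) z = f z * dbar g z + g z * dbar f z := by
  simp only [dbar, fderiv_fun_mul hf hg, add_apply, smul_apply, smul_eq_mul]
  ring

lemma dbar_eq_zero_of_differentiableAt (hf : DifferentiableAt ℂ f z) : dbar f z = 0 := by
  have hI : fderiv ℂ f z Complex.I = Complex.I * fderiv ℂ f z 1 := by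
    rw [← smul_eq_mul, ← map_smul, smul_eq_mul, mul_one]
  simp only [dbar, hf.fderiv_restrictScalars ℝ, ContinuousLinearMap.coe_restrictScalars', hI]
  linear_combination (1 / 2 * fderiv ℂ f z 1) * Complex.I_mul_I

lemma dbar_mul_of_differentiableAt (hg : DifferentiableAt ℝ g z) (hf : DifferentiableAt ℂ f z) :
    dbar (fun w ↦ g w * f w) z = f z * dbar g z := by
  rw [dbar_mul hg (hf.restrictScalars ℝ), dbar_eq_zero_of_differentiableAt hf, mul_zero, zero_add]

lemma support_dbar_subset (f : ℂ → ℂ) : Function.support (dbar f) ⊆ tsupport f := by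
  intro z hz
  contrapose! hz
  simp [dbar, fderiv_of_notMem_tsupport ℝ hz]

lemma continuous_dbar (hf : ContDiff ℝ 1 f) : Continuous (dbar f) := by
  have := hf.continuous_fderiv one_ne_zero
  unfold dbar
  fun_prop

lemma conj_mul_dbar (f : ℂ → ℂ) (z v : ℂ) :
    conj v * dbar f z = 1 / 2 * (fderiv ℝ f z v + Complex.I * fderiv ℝ f z (v * Complex.I)) := by
  have hv : fderiv ℝ f z v = v.re * fderiv ℝ f z 1 + v.im * fderiv ℝ f z Complex.I := by
    rw [← Complex.real_smul, ← Complex.real_smul, ← map_smul, ← map_smul, ← map_add]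
    simp
  have hvI : fderiv ℝ f z (v * Complex.I) =
      v.re * fderiv ℝ f z Complex.I - v.im * fderiv ℝ f z 1 := by
    rw [← Complex.real_smul, ← Complex.real_smul, ← map_smul, ← map_smul, ← map_sub]
    congr 1
    apply Complex.ext <;> simp
  have hconj : conj v = v.re - v.im * Complex.I := by
    apply Complex.ext <;> simp
  rw [hv, hvI, hconj, dbar]
  linear_combination (-(1 / 2) * v.im * fderiv ℝ f z Complex.I) * Complex.I_mul_I

end Dbar

section Circle

variable {E : Type*} [NormedAddCommGroup E] [NormedSpace ℝ E]

lemma circleMap_eq_add_mul (z : ℂ) (r θ : ℝ) : circleMap z r θ = z + r * circleMap 0 1 θ := by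
  simp [circleMap]

lemma continuous_uncurry_circleMap (z : ℂ) :
    Continuous fun p : ℝ × ℝ ↦ circleMap z p.1 p.2 := by
  unfold circleMap
  fun_prop

lemma norm_circleAverage_le {h : ℂ → E} {z : ℂ} {R C : ℝ} (hC : ∀ w ∈ sphere z |R|, ‖h w‖ ≤ C) :
    ‖Real.circleAverage h z R‖ ≤ C := by
  have hint : ‖∫ θ in 0..2 * π, h (circleMap z R θ)‖ ≤ C * |2 * π - 0| :=
    intervalIntegral.norm_integral_le_of_norm_le_const fun θ _ ↦
      hC _ (circleMap_mem_sphere' z R θ)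
  rw [sub_zero, abs_of_pos Real.two_pi_pos] at hint
  rw [Real.circleAverage, norm_smul, norm_inv, Real.norm_of_nonneg Real.two_pi_pos.le,
    inv_mul_le_iff₀ Real.two_pi_pos]
  linarith

lemma tendsto_circleAverage_atTop [CompleteSpace E] {h : ℂ → E} (hh : Continuous h) {a : E}
    (ha : Tendsto h (cobounded ℂ) (𝓝 a)) (z : ℂ) :
    Tendsto (Real.circleAverage h z) atTop (𝓝 a) := by
  refine Metric.nhds_basis_closedBall.tendsto_right_iff.2 fun ε hε ↦ ?_
  obtain ⟨r, -, hr⟩ := (hasBasis_cobounded_compl_ball z).eventually_iff.1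
    (ha.eventually (closedBall_mem_nhds a hε))
  filter_upwards [eventually_ge_atTop r, eventually_ge_atTop 0] with R hrR hR
  have hsub : Real.circleAverage h z R - a = Real.circleAverage (fun w ↦ h w - a) z R := by
    rw [Real.circleAverage_fun_sub hh.continuousOn.circleIntegrable' (circleIntegrable_const a z R),
      Real.circleAverage_const]
  rw [mem_closedBall, dist_eq_norm, hsub]
  refine norm_circleAverage_le fun w hw ↦ ?_
  rw [mem_sphere, abs_of_nonneg hR] at hw
  rw [← dist_eq_norm]
  exact hr (by simpa [hw] using hrR)

lemma setIntegral_ball_eq_setIntegral_circleMap (F : ℂ → E) (z : ℂ) (R : ℝ) :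
    ∫ μ in ball z R, F μ =
      ∫ p in Ioo 0 R ×ˢ Ioo (-π) π, p.1 • F (circleMap z p.1 p.2) := by
  have hpolar (p : ℝ × ℝ) : z + Complex.polarCoord.symm p = circleMap z p.1 p.2 := by
    simp [circleMap, Complex.exp_mul_I]
  have hset : Complex.polarCoord.target ∩ Iio R ×ˢ univ = Ioo 0 R ×ˢ Ioo (-π) π := by
    rw [Complex.polarCoord_target, prod_inter_prod, inter_univ, Ioi_inter_Iio]
  calc ∫ μ in ball z R, F μ = ∫ w, (ball z R).indicator F (z + w) := by
        rw [integral_add_left_eq_self, integral_indicator measurableSet_ball]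
    _ = ∫ p in Complex.polarCoord.target, p.1 • (ball z R).indicator F (circleMap z p.1 p.2) := by
        rw [← Complex.integral_comp_polarCoord_symm]
        simp only [hpolar]
        rfl
    _ = ∫ p in Complex.polarCoord.target,
          (Iio R ×ˢ univ).indicator (fun p ↦ p.1 • F (circleMap z p.1 p.2)) p := by
        refine setIntegral_congr_fun Complex.polarCoord.open_target.measurableSet fun p hp ↦ ?_
        have hmem : circleMap z p.1 p.2 ∈ ball z R ↔ p ∈ Iio R ×ˢ (univ : Set ℝ) := by
          simp [mem_ball, dist_eq_norm, abs_of_pos (mem_Ioi.1 hp.1)]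
        by_cases hpR : p ∈ Iio R ×ˢ (univ : Set ℝ)
        · simp only [indicator_of_mem hpR, indicator_of_mem (hmem.2 hpR)]
        · simp only [indicator_of_notMem hpR, indicator_of_notMem (mt hmem.1 hpR), smul_zero]
    _ = _ := by rw [setIntegral_indicator (measurableSet_Iio.prod .univ), hset]

lemma setIntegral_ball_eq_integral_circleMap {F : ℂ → E} {z : ℂ} {R : ℝ} (hR : 0 ≤ R)
    (hF : IntegrableOn (fun p : ℝ × ℝ ↦ p.1 • F (circleMap z p.1 p.2))
      (Ioo 0 R ×ˢ Ioo (-π) π)) :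
    ∫ μ in ball z R, F μ = ∫ r in 0..R, ∫ θ in 0..2 * π, r • F (circleMap z r θ) := by
  have hshift (r : ℝ) : ∫ θ in 0..2 * π, r • F (circleMap z r θ) =
      ∫ θ in Ioo (-π) π, r • F (circleMap z r θ) := by
    have hper : (fun θ ↦ r • F (circleMap z r θ)).Periodic (2 * π) := fun θ ↦ by
      simp only [periodic_circleMap z r θ]
    have hshift := hper.intervalIntegral_add_eq 0 (-π)
    rw [zero_add, show -π + 2 * π = π by ring] at hshift
    rw [hshift, intervalIntegral.integral_of_le (neg_le_self Real.pi_pos.le),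
      integral_Ioc_eq_integral_Ioo]
  simp only [hshift]
  rw [setIntegral_ball_eq_setIntegral_circleMap, intervalIntegral.integral_of_le hR,
    integral_Ioc_eq_integral_Ioo]
  exact setIntegral_prod _ hF

variable {h : ℂ → E} (hh : ContDiff ℝ 1 h) (z : ℂ)
include hh

lemma integral_fderiv_circleMap_tangent [CompleteSpace E] (r : ℝ) :
    ∫ θ in 0..2 * π, fderiv ℝ h (circleMap z r θ) (circleMap 0 r θ * Complex.I) = 0 := by
  have := hh.continuous_fderiv one_ne_zero
  have hderiv (θ : ℝ) : HasDerivAt (fun θ ↦ h (circleMap z r θ))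
      (fderiv ℝ h (circleMap z r θ) (circleMap 0 r θ * Complex.I)) θ :=
    (hh.differentiable one_ne_zero _).hasFDerivAt.comp_hasDerivAt θ (hasDerivAt_circleMap z r θ)
  rw [intervalIntegral.integral_eq_sub_of_hasDerivAt (fun θ _ ↦ hderiv θ)
    (Continuous.intervalIntegrable (by fun_prop) _ _), (periodic_circleMap z r).eq, sub_self]

lemma integral_fderiv_circleMap_radial [CompleteSpace E] (θ R : ℝ) :
    ∫ r in 0..R, fderiv ℝ h (circleMap z r θ) (circleMap 0 1 θ) = h (circleMap z R θ) - h z := by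
  have := hh.continuous_fderiv one_ne_zero
  have hray (r : ℝ) : HasDerivAt (fun r : ℝ ↦ circleMap z r θ) (circleMap 0 1 θ) r := by
    simp only [circleMap_eq_add_mul z]
    simpa using (Complex.ofRealCLM.hasDerivAt.mul_const (circleMap 0 1 θ)).const_add z
  have : Continuous fun r : ℝ ↦ circleMap z r θ :=
    (continuous_uncurry_circleMap z).comp (.prodMk_left θ)
  have hderiv (r : ℝ) : HasDerivAt (fun r : ℝ ↦ h (circleMap z r θ))
      (fderiv ℝ h (circleMap z r θ) (circleMap 0 1 θ)) r :=
    (hh.differentiable one_ne_zero _).hasFDerivAt.comp_hasDerivAt r (hray r)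
  rw [intervalIntegral.integral_eq_sub_of_hasDerivAt (fun r _ ↦ hderiv r)
    (Continuous.intervalIntegrable (by fun_prop) _ _), circleMap_zero_radius, Function.const_apply]

lemma integral_integral_fderiv_circleMap_radial [CompleteSpace E] (R : ℝ) :
    ∫ r in 0..R, ∫ θ in 0..2 * π, fderiv ℝ h (circleMap z r θ) (circleMap 0 1 θ) =
      (2 * π) • (Real.circleAverage h z R - h z) := by
  have := hh.continuous_fderiv one_ne_zero
  have := continuous_uncurry_circleMap z
  have hcont : Continuous (Function.uncurry fun r θ : ℝ ↦
      fderiv ℝ h (circleMap z r θ) (circleMap 0 1 θ)) := by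
    unfold Function.uncurry
    fun_prop
  have hcirc : CircleIntegrable h z R := hh.continuous.continuousOn.circleIntegrable'
  rw [intervalIntegral_intervalIntegral_swap
    ((hcont.continuousOn.integrableOn_compact (isCompact_uIcc.prod isCompact_uIcc)).mono_set
      (prod_mono uIoc_subset_uIcc uIoc_subset_uIcc))]
  simp only [integral_fderiv_circleMap_radial hh]
  rw [intervalIntegral.integral_sub hcirc intervalIntegrable_const, Real.circleAverage, smul_sub,
    smul_inv_smul₀ Real.two_pi_pos.ne', intervalIntegral.integral_const, sub_zero]

end Circle

section CauchyPompeiu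

lemma smul_div_sub_circleMap (c z : ℂ) {r : ℝ} (hr : r ≠ 0) (θ : ℝ) :
    r • (c / (z - circleMap z r θ)) = -(conj (circleMap 0 1 θ) * c) := by
  have hr' : (r : ℂ) ≠ 0 := mod_cast hr
  have hunit : conj (circleMap 0 1 θ) * circleMap 0 1 θ = 1 := by
    rw [Complex.conj_mul', norm_circleMap_zero]
    simp
  have hne : circleMap 0 1 θ ≠ 0 := circleMap_ne_center one_ne_zero
  rw [Complex.real_smul, circleMap_eq_add_mul z, sub_add_cancel_left]
  field_simp
  linear_combination c * hunit

variable {h : ℂ → ℂ} (hh : ContDiff ℝ 1 h) (z : ℂ)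
include hh

lemma integral_smul_dbar_div_sub_circleMap {r : ℝ} (hr : r ≠ 0) :
    ∫ θ in 0..2 * π, r • (dbar h (circleMap z r θ) / (z - circleMap z r θ)) =
      -(1 / 2) * ∫ θ in 0..2 * π, fderiv ℝ h (circleMap z r θ) (circleMap 0 1 θ) := by
  have := hh.continuous_fderiv one_ne_zero
  have htangent : ∫ θ in 0..2 * π,
      fderiv ℝ h (circleMap z r θ) (circleMap 0 1 θ * Complex.I) = 0 := by
    have hscale (θ : ℝ) : circleMap 0 r θ * Complex.I = r • (circleMap 0 1 θ * Complex.I) := by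
      rw [circleMap_eq_add_mul, zero_add, Complex.real_smul, mul_assoc]
    have hzero := integral_fderiv_circleMap_tangent hh z r
    simp only [hscale, map_smul] at hzero
    rw [intervalIntegral.integral_smul] at hzero
    exact (smul_eq_zero.1 hzero).resolve_left hr
  simp only [smul_div_sub_circleMap _ z hr, conj_mul_dbar]
  rw [intervalIntegral.integral_neg, intervalIntegral.integral_const_mul,
    intervalIntegral.integral_add (Continuous.intervalIntegrable (by fun_prop) _ _)
      (Continuous.intervalIntegrable (by fun_prop) _ _),
    intervalIntegral.integral_const_mul, htangent, mul_zero, add_zero, neg_mul]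

lemma setIntegral_ball_dbar_div_sub {R : ℝ} (hR : 0 ≤ R) :
    ∫ μ in ball z R, dbar h μ / (z - μ) = π * (h z - Real.circleAverage h z R) := by
  have hpolar : IntegrableOn
      (fun p : ℝ × ℝ ↦ p.1 • (dbar h (circleMap z p.1 p.2) / (z - circleMap z p.1 p.2)))
      (Ioo 0 R ×ˢ Ioo (-π) π) := by
    have hcont : Continuous fun p : ℝ × ℝ ↦
        -(conj (circleMap 0 1 p.2) * dbar h (circleMap z p.1 p.2)) := by
      have := continuous_dbar hh
      have := continuous_uncurry_circleMap z
      fun_prop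
    refine IntegrableOn.congr_fun
      ((hcont.continuousOn.integrableOn_compact (isCompact_Icc.prod isCompact_Icc)).mono_set
        (prod_mono Ioo_subset_Icc_self Ioo_subset_Icc_self))
      (fun p hp ↦ ?_) (measurableSet_Ioo.prod measurableSet_Ioo)
    exact (smul_div_sub_circleMap _ z hp.1.1.ne' p.2).symm
  calc ∫ μ in ball z R, dbar h μ / (z - μ)
      = ∫ r in 0..R, ∫ θ in 0..2 * π,
          r • (dbar h (circleMap z r θ) / (z - circleMap z r θ)) :=
        setIntegral_ball_eq_integral_circleMap hR hpolar
    _ = ∫ r in 0..R, -(1 / 2) * ∫ θ in 0..2 * π,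
          fderiv ℝ h (circleMap z r θ) (circleMap 0 1 θ) := by
        simp only [intervalIntegral.integral_of_le hR]
        exact setIntegral_congr_fun measurableSet_Ioc fun r hr ↦
          integral_smul_dbar_div_sub_circleMap hh z hr.1.ne'
    _ = π * (h z - Real.circleAverage h z R) := by
        rw [intervalIntegral.integral_const_mul, integral_integral_fderiv_circleMap_radial hh,
          Complex.real_smul]
        push_cast
        ring

theorem cauchyT_dbar {a : ℂ} (ha : Tendsto h (cobounded ℂ) (𝓝 a))
    (hs : HasCompactSupport (dbar h)) : cauchyT (dbar h) z = h z - a := by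
  obtain ⟨r, hr⟩ := hs.isCompact.isBounded.subset_ball z
  have hball : ∀ᶠ R in atTop,
      π * (h z - Real.circleAverage h z R) = ∫ μ, dbar h μ / (z - μ) := by
    filter_upwards [eventually_ge_atTop r, eventually_ge_atTop 0] with R hrR hR
    rw [← setIntegral_ball_dbar_div_sub hh z hR]
    refine setIntegral_eq_integral_of_forall_compl_eq_zero fun μ hμ ↦ ?_
    have hμs : μ ∉ tsupport (dbar h) := fun hμs ↦ hμ (ball_subset_ball hrR (hr hμs))
    rw [image_eq_zero_of_notMem_tsupport hμs, zero_div]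
  have hlim : Tendsto (fun R ↦ π * (h z - Real.circleAverage h z R)) atTop (𝓝 (π * (h z - a))) :=
    ((tendsto_circleAverage_atTop hh.continuous ha z).const_sub (h z)).const_mul (π : ℂ)
  have hint : ∫ μ, dbar h μ / (z - μ) = π * (h z - a) :=
    tendsto_nhds_unique (tendsto_const_nhds.congr' (hball.mono fun _ ↦ Eq.symm)) hlim
  rw [cauchyT, hint, one_div, inv_mul_cancel_left₀ (Complex.ofReal_ne_zero.2 Real.pi_ne_zero)]

end CauchyPompeiu

section Bump

variable {K : Set ℂ} {f : ℂ → ℂ}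

lemma contDiff_mul_of_eventually_eq_zero {n : WithTop ℕ∞} {g : ℂ → ℂ} (hK : IsClosed K)
    (hf : DifferentiableOn ℂ f Kᶜ) (hg : ContDiff ℝ n g) (hg0 : ∀ᶠ w in 𝓝ˢ K, g w = 0) :
    ContDiff ℝ n fun w ↦ g w * f w := by
  refine contDiff_iff_contDiffAt.2 fun z ↦ ?_
  by_cases hz : z ∈ K
  · refine (contDiffAt_const (c := 0)).congr_of_eventuallyEq ?_
    filter_upwards [hg0.filter_mono (nhds_le_nhdsSet hz)] with w hw
    rw [hw, zero_mul]
  · have hfz : ContDiffAt ℂ n f z := (hf.analyticAt (hK.isOpen_compl.mem_nhds hz)).contDiffAt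
    exact hg.contDiffAt.mul (hfz.restrict_scalars ℝ)

lemma tendsto_sub_one_mul_cobounded {χ : ℂ → ℂ} (hχ : HasCompactSupport χ) {a : ℂ}
    (hfa : Tendsto f (cobounded ℂ) (𝓝 a)) :
    Tendsto (fun w ↦ (χ w - 1) * f w) (cobounded ℂ) (𝓝 (-a)) := by
  refine hfa.neg.congr' ?_
  filter_upwards [isBounded_def.1 hχ.isCompact.isBounded] with w hw
  rw [image_eq_zero_of_notMem_tsupport hw, zero_sub, neg_one_mul]

theorem cauchyT_of_bump_form_general (hK : IsClosed K) (hf : DifferentiableOn ℂ f Kᶜ) {a : ℂ}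
    (hfa : Tendsto f (cobounded ℂ) (𝓝 a)) {χ : ℂ → ℂ} (hχ : ContDiff ℝ 1 χ)
    (hχs : HasCompactSupport χ) (hχ1 : ∀ᶠ w in 𝓝ˢ K, χ w = 1) {F : ℂ → ℂ}
    (hF : ∀ z ∉ K, F z = f z * dbar χ z) (hF0 : ∀ z ∈ K, F z = 0) (z : ℂ) :
    cauchyT F z = (χ z - 1) * f z + a := by
  have hχ0 : ∀ᶠ w in 𝓝ˢ K, χ w - 1 = 0 := hχ1.mono fun w hw ↦ sub_eq_zero.2 hw
  have hh : ContDiff ℝ 1 fun w ↦ (χ w - 1) * f w :=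
    contDiff_mul_of_eventually_eq_zero hK hf (hχ.sub contDiff_const) hχ0
  have hdbar : dbar (fun w ↦ (χ w - 1) * f w) = F := by
    funext w
    by_cases hw : w ∈ K
    · have hnear : (fun w ↦ (χ w - 1) * f w) =ᶠ[𝓝 w] fun _ ↦ 0 :=
        (hχ0.filter_mono (nhds_le_nhdsSet hw)).mono fun v hv ↦ mul_eq_zero_of_left hv _
      rw [hF0 w hw, dbar_congr hnear,
        dbar_eq_zero_of_differentiableAt (differentiableAt_const 0)]
    · rw [hF w hw, dbar_mul_of_differentiableAt
        ((hχ.differentiable one_ne_zero w).sub_const 1)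
        (hf.differentiableAt (hK.isOpen_compl.mem_nhds hw)), dbar_sub_const]
  have hFs : HasCompactSupport F := hχs.mono' fun w hw ↦ by
    have hwK : w ∉ K := mt (hF0 w) hw
    rw [Function.mem_support, hF w hwK] at hw
    exact support_dbar_subset χ (right_ne_zero_of_mul hw)
  rw [← hdbar, cauchyT_dbar hh z (tendsto_sub_one_mul_cobounded hχs hfa) (hdbar ▸ hFs),
    sub_neg_eq_add]

end Bump

/-- Lemma 2.4, first part (concrete form): for `f` holomorphic off a compact `K` and
vanishing at infinity, and `ρ` a smooth compactly supported bump equal to `1` near `K`,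
the Cauchy transform of `F = f·∂̄ρ` (extended by `0` on `K`) satisfies
`(TF)(z) = (ρ(z) − 1)·f(z)` for all `z ∉ K`; in particular `TF = −f` off `tsupport ρ`. -/
theorem cauchyT_of_bump_form (K : Set ℂ) (hK : IsCompact K)
    (f : ℂ → ℂ) (hf : DifferentiableOn ℂ f Kᶜ)
    (hf0 : Filter.Tendsto f (Bornology.cobounded ℂ) (nhds 0))
    (ρ : ℂ → ℝ) (hρ : ContDiff ℝ (⊤ : ℕ∞) ρ) (hρs : HasCompactSupport ρ)
    (hρ1 : ∃ V : Set ℂ, IsOpen V ∧ K ⊆ V ∧ ∀ z ∈ V, ρ z = 1)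
    (F : ℂ → ℂ)
    (hF : ∀ z ∉ K, F z = f z * dbar (fun w => (ρ w : ℂ)) z)
    (hF0 : ∀ z ∈ K, F z = 0) :
    (∀ z ∉ K, cauchyT F z = ((ρ z : ℂ) - 1) * f z) ∧
      ∀ z ∉ tsupport ρ, cauchyT F z = -f z := by
  have hT (z : ℂ) : cauchyT F z = ((ρ z : ℂ) - 1) * f z := by
    simpa using cauchyT_of_bump_form_general hK.isClosed hf hf0
      (Complex.ofRealCLM.contDiff.comp (hρ.of_le (mod_cast le_top)))
      (hρs.comp_left Complex.ofReal_zero)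
      (eventually_nhdsSet_iff_exists.2 (by simpa using hρ1)) hF hF0 z
  exact ⟨fun z _ ↦ hT z, fun z hz ↦ by simp [hT, image_eq_zero_of_notMem_tsupport hz]⟩
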